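/- Let l ≥ 1, p > 0 and C > 0. Suppose h : ℂ^l → ℂ is differentiable in the real sense and satisfies, for every z ∈ ℂ^l and every m ∈ {1,…,l}, |∂h/∂z_m(z)| + |∂h/∂z̄_m(z)| ≤ C ∑_{j=1}^l |z_j|^p. Then there is a constant C' > 0, depending only on C, p and l, such that for all z, z' ∈ ℂ^l: |h(z) − h(z')| ≤ C' ∑_{m=1}^l ∑_{j=1}^l (|z_j|^p + |z_j'|^p) |z_m − z_m'|. -/

import Mathlib

open Complex MeasureTheory

/-- Wirtinger derivative `∂h/∂z_m` of a function `h : ℂ^l → ℂ`, differentiable in the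
real sense: `(1/2)(∂h/∂x_m − i ∂h/∂y_m)`. -/
noncomputable def wderiv {l : ℕ} (h : (Fin l → ℂ) → ℂ) (m : Fin l) (z : Fin l → ℂ) : ℂ :=
  (1 / 2) * (fderiv ℝ h z (Pi.single m 1) - Complex.I * fderiv ℝ h z (Pi.single m Complex.I))

/-- Conjugate Wirtinger derivative `∂h/∂z̄_m = (1/2)(∂h/∂x_m + i ∂h/∂y_m)`. -/
noncomputable def wderivBar {l : ℕ} (h : (Fin l → ℂ) → ℂ) (m : Fin l) (z : Fin l → ℂ) : ℂ :=
  (1 / 2) * (fderiv ℝ h z (Pi.single m 1) + Complex.I * fderiv ℝ h z (Pi.single m Complex.I))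

/-!
The real differential of `h` sends `v` to `∑ m, (∂h/∂z_m * v_m + ∂h/∂z̄_m * conj v_m)`, so a bound
on the Wirtinger derivatives along the segment from `z'` to `z` bounds the derivative of `h` along
it. At each point `w` of the segment `‖w_j‖ ≤ max ‖z_j‖ ‖z'_j‖`, hence
`‖w_j‖ ^ p ≤ ‖z_j‖ ^ p + ‖z'_j‖ ^ p`, and the mean value inequality gives the claim with `C' = C`.
-/

section Segment

variable {E : Type*} [SeminormedAddCommGroup E] [NormedSpace ℝ E]

lemma norm_rpow_le_add_of_mem_segment {a b w : E} {p : ℝ} (hp : 0 ≤ p) (hw : w ∈ segment ℝ a b) :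
    ‖w‖ ^ p ≤ ‖a‖ ^ p + ‖b‖ ^ p := by
  have norm_le_max : ‖w‖ ≤ max ‖a‖ ‖b‖ :=
    convexOn_univ_norm.le_max_of_mem_segment (Set.mem_univ a) (Set.mem_univ b) hw
  calc ‖w‖ ^ p ≤ max ‖a‖ ‖b‖ ^ p := by gcongr
    _ = max (‖a‖ ^ p) (‖b‖ ^ p) := Real.rpow_max (norm_nonneg a) (norm_nonneg b) hp
    _ ≤ ‖a‖ ^ p + ‖b‖ ^ p := max_le_add_of_nonneg (by positivity) (by positivity)

end Segment

section MeanValue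

variable {E F : Type*} [NormedAddCommGroup E] [NormedSpace ℝ E]
  [NormedAddCommGroup F] [NormedSpace ℝ F]

-- Bounding `f' w` only in the direction `y - x`, rather than in operator norm, leaves the choice
-- of norm on `E` out of the estimate.
lemma norm_image_sub_le_of_norm_hasFDerivWithinAt_apply_le_segment {f : E → F}
    {f' : E → E →L[ℝ] F} {x y : E} {K : ℝ}
    (hf : ∀ w ∈ segment ℝ x y, HasFDerivWithinAt f (f' w) (segment ℝ x y) w)
    (bound : ∀ w ∈ segment ℝ x y, ‖f' w (y - x)‖ ≤ K) :
    ‖f y - f x‖ ≤ K := by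
  have mapsTo_segment : Set.MapsTo (AffineMap.lineMap x y) (Set.Icc (0 : ℝ) 1) (segment ℝ x y) :=
    fun _ ht => lineMap_mem_segment ℝ x y ht
  have hasDeriv (t : ℝ) (ht : t ∈ Set.Icc (0 : ℝ) 1) :
      HasDerivWithinAt (f ∘ AffineMap.lineMap x y) (f' (AffineMap.lineMap x y t) (y - x))
        (Set.Icc 0 1) t :=
    (hf _ (mapsTo_segment ht)).comp_hasDerivWithinAt t AffineMap.hasDerivWithinAt_lineMap
      mapsTo_segment
  simpa only [Function.comp_apply, AffineMap.lineMap_apply_one, AffineMap.lineMap_apply_zero] using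
    norm_image_sub_le_of_norm_deriv_le_segment_01' hasDeriv
      fun t ht => bound _ (mapsTo_segment (Set.Ico_subset_Icc_self ht))

end MeanValue

section Wirtinger

variable {l : ℕ} (h : (Fin l → ℂ) → ℂ) (z : Fin l → ℂ)

lemma fderiv_single_eq_wderiv_mul_add_wderivBar_mul_conj (m : Fin l) (v : ℂ) :
    fderiv ℝ h z (Pi.single m v) = wderiv h m z * v + wderivBar h m z * starRingEnd ℂ v := by
  have single_eq : (Pi.single m v : Fin l → ℂ) =
      v.re • (Pi.single m 1 : Fin l → ℂ) + v.im • (Pi.single m I : Fin l → ℂ) := by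
    rw [← Pi.single_smul, ← Pi.single_smul, ← Pi.single_add, real_smul, real_smul, mul_one,
      re_add_im]
  have conj_eq : starRingEnd ℂ v = v.re - v.im * I := by
    apply Complex.ext <;> simp
  rw [single_eq, map_add, map_smul, map_smul, real_smul, real_smul, conj_eq, wderiv, wderivBar]
  linear_combination v.im * fderiv ℝ h z (Pi.single m I) * I_mul_I +
    (1 / 2) * (fderiv ℝ h z (Pi.single m 1) - I * fderiv ℝ h z (Pi.single m I)) * re_add_im v

lemma norm_fderiv_apply_le_sum_wderiv (v : Fin l → ℂ) :
    ‖fderiv ℝ h z v‖ ≤ ∑ m, (‖wderiv h m z‖ + ‖wderivBar h m z‖) * ‖v m‖ :=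
  calc ‖fderiv ℝ h z v‖ = ‖∑ m, fderiv ℝ h z (Pi.single m (v m))‖ := by
        rw [← map_sum, Finset.univ_sum_single]
    _ ≤ ∑ m, ‖fderiv ℝ h z (Pi.single m (v m))‖ := norm_sum_le _ _
    _ ≤ ∑ m, (‖wderiv h m z‖ + ‖wderivBar h m z‖) * ‖v m‖ := by
        gcongr with m
        rw [fderiv_single_eq_wderiv_mul_add_wderivBar_mul_conj, add_mul]
        refine (norm_add_le _ _).trans_eq ?_
        rw [norm_mul, norm_mul, RCLike.norm_conj]

variable {h z}

lemma norm_sub_le_mul_sum_of_wderiv_le_segment {z' : Fin l → ℂ} {B : ℝ}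
    (hd : ∀ w ∈ segment ℝ z' z, DifferentiableAt ℝ h w)
    (bound : ∀ w ∈ segment ℝ z' z, ∀ m, ‖wderiv h m w‖ + ‖wderivBar h m w‖ ≤ B) :
    ‖h z - h z'‖ ≤ B * ∑ m, ‖z m - z' m‖ := by
  refine norm_image_sub_le_of_norm_hasFDerivWithinAt_apply_le_segment
    (fun w hw => (hd w hw).hasFDerivAt.hasFDerivWithinAt) fun w hw => ?_
  calc ‖fderiv ℝ h w (z - z')‖
      ≤ ∑ m, (‖wderiv h m w‖ + ‖wderivBar h m w‖) * ‖z m - z' m‖ :=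
        norm_fderiv_apply_le_sum_wderiv h w (z - z')
    _ ≤ ∑ m, B * ‖z m - z' m‖ := by
        gcongr with m
        exact bound w hw m
    _ = B * ∑ m, ‖z m - z' m‖ := (Finset.mul_sum ..).symm

end Wirtinger

theorem stmt_1 (l : ℕ) (hl : 1 ≤ l) (p C : ℝ) (hp : 0 < p) (hC : 0 < C) :
    ∃ C' : ℝ, 0 < C' ∧
      ∀ h : (Fin l → ℂ) → ℂ, Differentiable ℝ h →
        (∀ (z : Fin l → ℂ) (m : Fin l),
          ‖wderiv h m z‖ + ‖wderivBar h m z‖ ≤ C * ∑ j, ‖z j‖ ^ p) →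
        ∀ z z' : Fin l → ℂ,
          ‖h z - h z'‖ ≤ C' * ∑ m, ∑ j, (‖z j‖ ^ p + ‖z' j‖ ^ p) * ‖z m - z' m‖ := by
  refine ⟨C, hC, fun h hd hb z z' => ?_⟩
  have wirtinger_le (w : Fin l → ℂ) (hw : w ∈ segment ℝ z' z) (m : Fin l) :
      ‖wderiv h m w‖ + ‖wderivBar h m w‖ ≤ C * ∑ j, (‖z j‖ ^ p + ‖z' j‖ ^ p) := by
    refine (hb w m).trans ?_
    gcongr with j
    rw [segment_symm] at hw
    exact norm_rpow_le_add_of_mem_segment hp.le (Pi.segment_subset z z' hw j (Set.mem_univ j))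
  calc ‖h z - h z'‖
      ≤ C * (∑ j, (‖z j‖ ^ p + ‖z' j‖ ^ p)) * ∑ m, ‖z m - z' m‖ :=
        norm_sub_le_mul_sum_of_wderiv_le_segment (fun w _ => hd w) wirtinger_le
    _ = C * ∑ m, ∑ j, (‖z j‖ ^ p + ‖z' j‖ ^ p) * ‖z m - z' m‖ := by
        rw [mul_assoc, Finset.sum_mul_sum, Finset.sum_comm]
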